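/- Let k be a field, m, p ≥ 1 and n = m + p. Let A : Matrix (Fin m) (Fin n) k have rank m, let B : Matrix (Fin p) (Fin n) k have rank p, and suppose A * Bᵀ = 0. Then there exists a nonzero c ∈ k such that for every strictly monotone α : Fin m → Fin n, letting α^c : Fin p → Fin n denote the strictly monotone map whose range is the complement of the range of α, one has det (A.submatrix id α) = c * (−1)^(∑_i (α i : ℕ)) * det (B.submatrix id α^c). That is, the Plücker coordinates of a full-rank matrix and of a full-rank matrix spanning the orthogonal complement of its row space are proportional via complementary minors with sign (−1)^(∑ α i). -/

import Mathlib

/-!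
Extend `A` by rows `C` with `C * Bᵀ = 1` to a square matrix `M`. For every matrix `Y`, the product
of `M` with `[Y | Bᵀ]` is block lower triangular with diagonal blocks `A * Y` and `1`, so
`det M * det [Y | Bᵀ] = det (A * Y)`. Taking for `Y` a right inverse of `A` shows that `det M` is a
unit; taking for `Y` the standard basis vectors indexed by `α` turns the identity into the asserted
proportionality of complementary minors, once the columns of `M` are permuted so that those in `α`
come first. For the sign of this permutation, the number of inversions that start at the `i`-th
column is `α i - i`.
-/

open Finset Matrix

theorem bijective_sumElim_of_range_eq_compl {α β γ : Type*} {f : α → γ} {g : β → γ}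
    (hf : f.Injective) (hg : g.Injective) (hfg : Set.range g = (Set.range f)ᶜ) :
    (Sum.elim f g).Bijective := by
  refine ⟨hf.sumElim hg fun a b hab => ?_, ?_⟩
  · have hb : g b ∈ (Set.range f)ᶜ := hfg ▸ Set.mem_range_self b
    exact hb ⟨a, hab⟩
  · rw [← Set.range_eq_univ, Set.Sum.elim_range, hfg, Set.union_compl_self]

section Sign

open Equiv.Perm

theorem val_add_card_inversions_eq_val_apply {n : ℕ} (σ : Equiv.Perm (Fin n)) {i : Fin n}
    (hi : ∀ j < i, σ j < σ i) : (i : ℕ) + #{j ∈ Ioi i | σ j < σ i} = σ i := by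
  have hpreimage : (Iio (σ i)).map σ.symm.toEmbedding = Iio i ∪ {j ∈ Ioi i | σ j < σ i} := by
    ext j
    simp only [mem_map_equiv, Equiv.symm_symm, mem_Iio, mem_union, mem_filter, mem_Ioi]
    grind
  have hdisjoint : Disjoint (Iio i) {j ∈ Ioi i | σ j < σ i} :=
    (disjoint_Ioi_Iio i).symm.mono_right (filter_subset _ _)
  calc (i : ℕ) + #{j ∈ Ioi i | σ j < σ i}
      = #(Iio i ∪ {j ∈ Ioi i | σ j < σ i}) := by
        rw [card_union_of_disjoint hdisjoint, Fin.card_Iio]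
    _ = σ i := by rw [← hpreimage, card_map, Fin.card_Iio]

theorem prod_Ioi_ite_lt_eq_neg_one_pow {n : ℕ} (σ : Equiv.Perm (Fin n)) {i : Fin n}
    (hi : ∀ j < i, σ j < σ i) :
    ∏ j ∈ Ioi i, (if σ i < σ j then (1 : ℤˣ) else -1) = (-1) ^ (i + σ i : ℕ) := by
  have hinv : {j ∈ Ioi i | ¬ σ i < σ j} = {j ∈ Ioi i | σ j < σ i} :=
    filter_congr fun j hj => by grind [σ.injective.eq_iff]
  rw [prod_ite, prod_const_one, one_mul, prod_const, hinv,
    ← val_add_card_inversions_eq_val_apply σ hi, ← add_assoc, pow_add,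
    Even.neg_one_pow ⟨_, rfl⟩, one_mul]

theorem sign_eq_neg_one_pow_of_strictMono_blocks {m p : ℕ} (σ : Equiv.Perm (Fin (m + p)))
    (hl : StrictMono (σ ∘ Fin.castAdd p)) (hr : StrictMono (σ ∘ Fin.natAdd m)) :
    sign σ = (-1) ^ ∑ i : Fin m, (i + σ (Fin.castAdd p i) : ℕ) := by
  have hleft (i : Fin m) : ∀ j < Fin.castAdd p i, σ j < σ (Fin.castAdd p i) := fun j hj =>
    hl (a := j.castLT (lt_trans (Fin.lt_def.mp hj) i.isLt)) hj
  have hright (i : Fin p) :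
      ∏ j ∈ Ioi (Fin.natAdd m i), (if σ (Fin.natAdd m i) < σ j then (1 : ℤˣ) else -1) = 1 := by
    refine prod_eq_one fun j hj => if_pos ?_
    induction j using Fin.addCases with
    | left j => grind
    | right j => exact hr (by simpa using hj)
  simp only [sign_eq_prod_prod_Ioi, Fin.prod_univ_add, hright, prod_const_one, mul_one,
    prod_Ioi_ite_lt_eq_neg_one_pow σ (hleft _), prod_pow_eq_pow_sum, Fin.val_castAdd]

end Sign

section Det

variable {R m p ι : Type*} [CommRing R] [Fintype m] [DecidableEq m] [Fintype p] [DecidableEq p]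
  [Fintype ι]

theorem det_submatrix_id_eq_sign_mul [DecidableEq ι] (e₀ e : m ≃ ι) (M : Matrix m ι R) :
    (M.submatrix id e).det = Equiv.Perm.sign (e₀.symm.trans e) * (M.submatrix id e₀).det := by
  have hM : M.submatrix id e =
      ((M.submatrix e₀.symm id).submatrix id (e₀.symm.trans e)).submatrix e₀ e₀ := by
    ext; simp
  have hM₀ : M.submatrix id e₀ = (M.submatrix e₀.symm id).submatrix e₀ e₀ := by
    ext; simp
  rw [hM, hM₀, det_submatrix_equiv_self, det_submatrix_equiv_self, det_permute']

theorem det_fromRows_mul_det_fromCols (e : m ⊕ p ≃ ι) {A : Matrix m ι R} {C : Matrix p ι R}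
    {Z : Matrix ι p R} (hAZ : A * Z = 0) (hCZ : C * Z = 1) (Y : Matrix ι m R) :
    ((fromRows A C).submatrix id e).det * ((fromCols Y Z).submatrix e id).det = (A * Y).det := by
  rw [← det_mul, submatrix_mul_equiv, submatrix_id_id, fromRows_mul_fromCols, hAZ, hCZ,
    det_fromBlocks_zero₁₂, det_one, mul_one]

theorem isUnit_det_fromRows_submatrix (e : m ⊕ p ≃ ι) {A : Matrix m ι R} {C : Matrix p ι R}
    {X : Matrix ι m R} {Z : Matrix ι p R} (hAX : A * X = 1) (hAZ : A * Z = 0) (hCZ : C * Z = 1) :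
    IsUnit ((fromRows A C).submatrix id e).det :=
  .of_mul_eq_one _ <| by rw [det_fromRows_mul_det_fromCols e hAZ hCZ X, hAX, det_one]

theorem det_submatrix_inl_eq_mul_det_submatrix_inr (e : m ⊕ p ≃ ι) {A : Matrix m ι R}
    {B C : Matrix p ι R} (hAB : A * Bᵀ = 0) (hCB : C * Bᵀ = 1) :
    (A.submatrix id (e ∘ Sum.inl)).det =
      ((fromRows A C).submatrix id e).det * (B.submatrix id (e ∘ Sum.inr)).det := by
  classical
  let Y : Matrix ι m R := (1 : Matrix ι ι R).submatrix id (e ∘ Sum.inl)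
  have hAY : A * Y = A.submatrix id (e ∘ Sum.inl) := by
    simpa using (submatrix_mul A (1 : Matrix ι ι R) id id (e ∘ Sum.inl) Function.bijective_id).symm
  have hblocks : (fromCols Y Bᵀ).submatrix e id = fromBlocks 1 (B.submatrix id (e ∘ Sum.inl))ᵀ 0
      (B.submatrix id (e ∘ Sum.inr))ᵀ := by
    ext (i | i) (j | j) <;> simp [Y, one_apply]
  rw [← hAY, ← det_fromRows_mul_det_fromCols e hAB hCB Y, hblocks, det_fromBlocks_zero₂₁, det_one,
    one_mul, det_transpose]

end Det

theorem surjective_mulVec_of_rank_eq_card {K m n : Type*} [Field K] [Fintype m] [Fintype n]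
    {A : Matrix m n K} (hA : A.rank = Fintype.card m) : Function.Surjective A.mulVec :=
  LinearMap.range_eq_top.mp <| Submodule.eq_top_of_finrank_eq (K := K) (S := A.mulVecLin.range) <|
    hA.trans (Module.finrank_fintype_fun_eq_card K).symm

theorem plucker_duality_general {R : Type*} [CommRing R] {m p n : ℕ} (hn : n = m + p)
    {A : Matrix (Fin m) (Fin n) R} {B : Matrix (Fin p) (Fin n) R}
    (hA : Function.Surjective A.mulVec) (hB : Function.Surjective B.mulVec) (hAB : A * Bᵀ = 0) :
    ∃ c : Rˣ, ∀ (α : Fin m → Fin n) (αc : Fin p → Fin n),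
      StrictMono α → StrictMono αc → Set.range αc = (Set.range α)ᶜ →
        (A.submatrix id α).det = c * (-1) ^ (∑ i, (α i : ℕ)) * (B.submatrix id αc).det := by
  subst hn
  obtain ⟨X, hAX⟩ := mulVec_surjective_iff_exists_right_inverse.mp hA
  obtain ⟨Y, hBY⟩ := mulVec_surjective_iff_exists_right_inverse.mp hB
  have hYB : Yᵀ * Bᵀ = 1 := by rw [← transpose_mul, hBY, transpose_one]
  obtain ⟨d, hd⟩ := isUnit_det_fromRows_submatrix finSumFinEquiv hAX hAB hYB
  refine ⟨(-1) ^ (∑ i : Fin m, (i : ℕ)) * d, fun α αc hα hαc hrange => ?_⟩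
  let e := Equiv.ofBijective _
    (bijective_sumElim_of_range_eq_compl hα.injective hαc.injective hrange)
  let σ : Equiv.Perm (Fin (m + p)) := finSumFinEquiv.symm.trans e
  have hσl : σ ∘ Fin.castAdd p = α := by ext; simp [σ, e]
  have hσr : σ ∘ Fin.natAdd m = αc := by ext; simp [σ, e]
  have hsign := sign_eq_neg_one_pow_of_strictMono_blocks σ (hσl ▸ hα) (hσr ▸ hαc)
  calc (A.submatrix id α).det
      = ((fromRows A Yᵀ).submatrix id e).det * (B.submatrix id αc).det :=
        det_submatrix_inl_eq_mul_det_submatrix_inr e hAB hYB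
    _ = Equiv.Perm.sign σ * d * (B.submatrix id αc).det := by
        rw [det_submatrix_id_eq_sign_mul finSumFinEquiv e, hd]
    _ = _ := by
        simp only [hsign, ← hσl, Function.comp_apply, sum_add_distrib, pow_add]
        push_cast
        ring

theorem plucker_duality {k : Type*} [Field k] (m p n : ℕ)
    (hm : 1 ≤ m) (hp : 1 ≤ p) (hn : n = m + p)
    (A : Matrix (Fin m) (Fin n) k) (B : Matrix (Fin p) (Fin n) k)
    (hA : A.rank = m) (hB : B.rank = p) (hAB : A * B.transpose = 0) :
    ∃ c : k, c ≠ 0 ∧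
      ∀ (α : Fin m → Fin n) (αc : Fin p → Fin n),
        StrictMono α → StrictMono αc → Set.range αc = (Set.range α)ᶜ →
          (A.submatrix id α).det =
            c * (-1) ^ (∑ i, (α i : ℕ)) * (B.submatrix id αc).det := by
  obtain ⟨c, hc⟩ := plucker_duality_general hn
    (surjective_mulVec_of_rank_eq_card (by simpa using hA))
    (surjective_mulVec_of_rank_eq_card (by simpa using hB)) hAB
  exact ⟨c, c.ne_zero, hc⟩
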